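/- arXiv:2212.01919 — 2 statements merged into one kernel-verified Lean document; each statement's English description precedes it below -/
import Mathlib

section
/- Let X ⊆ (ℂ^n,0) be a germ of an analytic variety and f ∈ O_n with μ_X(f) < ∞, and set Y = f^{-1}(0). Then μ_X(f) = μ(f) + dim_ℂ Θ/(Θ_X + H_Y). -/
open Filter Topology Polynomial

set_option maxHeartbeats 1000000
set_option synthInstance.maxHeartbeats 1000000

noncomputable section

/-- The algebra structure on germs of complex valued functions. -/
instance Filter.Germ.instAlgebraComplex {α : Type*} (l : Filter α) :
    Algebra ℂ (Filter.Germ l ℂ) where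
  algebraMap := (Filter.Germ.coeRingHom l).comp (algebraMap ℂ (α → ℂ))
  commutes' := fun c g => mul_comm _ _
  smul_def' := fun c g => Filter.Germ.inductionOn g fun f => rfl

/-- The local algebra `𝒪ₙ` of germs at `0 ∈ ℂⁿ` of holomorphic functions,
realized as the subalgebra of germs at `0` admitting an analytic representative. -/
def On (n : ℕ) : Subalgebra ℂ (Filter.Germ (𝓝 (0 : Fin n → ℂ)) ℂ) where
  carrier := {g | ∃ f : (Fin n → ℂ) → ℂ,
    AnalyticAt ℂ f 0 ∧ (f : Filter.Germ (𝓝 (0 : Fin n → ℂ)) ℂ) = g}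
  mul_mem' := by
    rintro a b ⟨f, hf, rfl⟩ ⟨g, hg, rfl⟩
    exact ⟨f * g, hf.mul hg, rfl⟩
  add_mem' := by
    rintro a b ⟨f, hf, rfl⟩ ⟨g, hg, rfl⟩
    exact ⟨f + g, hf.add hg, rfl⟩
  algebraMap_mem' := fun c => ⟨fun _ => c, analyticAt_const, rfl⟩

variable {n : ℕ}

/-- Existence of an analytic representative for an element of `𝒪ₙ`. -/
lemma On.exists_rep (g : On n) : ∃ f : (Fin n → ℂ) → ℂ,
    AnalyticAt ℂ f 0 ∧ (f : Filter.Germ (𝓝 (0 : Fin n → ℂ)) ℂ) = (g : Filter.Germ _ ℂ) :=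
  g.2

/-- A chosen analytic representative of a germ in `𝒪ₙ`. -/
def On.rep (g : On n) : (Fin n → ℂ) → ℂ := (On.exists_rep g).choose

lemma On.rep_analyticAt (g : On n) : AnalyticAt ℂ (On.rep g) 0 :=
  (On.exists_rep g).choose_spec.1

lemma On.rep_spec (g : On n) :
    (On.rep g : Filter.Germ (𝓝 (0 : Fin n → ℂ)) ℂ) = (g : Filter.Germ _ ℂ) :=
  (On.exists_rep g).choose_spec.2

/-- Build an element of `𝒪ₙ` from an analytic function. -/
def mkOn {n : ℕ} (f : (Fin n → ℂ) → ℂ) (hf : AnalyticAt ℂ f 0) : On n :=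
  ⟨(f : Filter.Germ (𝓝 (0 : Fin n → ℂ)) ℂ), ⟨f, hf, rfl⟩⟩

/-- The `i`-th partial derivative, as an operation on `𝒪ₙ`. -/
def pd (i : Fin n) (g : On n) : On n :=
  mkOn (fun x => fderiv ℂ (On.rep g) x (Pi.single i 1)) (by
    have h := ((ContinuousLinearMap.apply ℂ ℂ (Pi.single i 1)).analyticAt
      (fderiv ℂ (On.rep g) 0)).comp (On.rep_analyticAt g).fderiv
    exact h)

/-- Restriction of germs at `0` to germs along a finer filter. -/
def restrictGerm {l : Filter (Fin n → ℂ)} (hl : l ≤ 𝓝 (0 : Fin n → ℂ)) :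
    Filter.Germ (𝓝 (0 : Fin n → ℂ)) ℂ →+* Filter.Germ l ℂ where
  toFun g := g.compTendsto id (Filter.tendsto_id'.2 hl)
  map_one' := rfl
  map_mul' a b := Filter.Germ.inductionOn₂ a b fun f g => rfl
  map_zero' := rfl
  map_add' a b := Filter.Germ.inductionOn₂ a b fun f g => rfl

/-- Evaluation of germs restricted along `l ≤ 𝓝 0`, as a ring homomorphism on `𝒪ₙ`. -/
def restrictOn (n : ℕ) {l : Filter (Fin n → ℂ)} (hl : l ≤ 𝓝 (0 : Fin n → ℂ)) :
    On n →+* Filter.Germ l ℂ :=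
  (restrictGerm hl).comp (On n).val.toRingHom

/-- The ideal `I_X ⊆ 𝒪ₙ` of germs vanishing on a set `X` near `0`. -/
def IX (n : ℕ) (X : Set (Fin n → ℂ)) : Ideal (On n) :=
  RingHom.ker (restrictOn n (nhdsWithin_le_nhds (s := X)))

/-- The maximal ideal `𝔪 ⊂ 𝒪ₙ` of germs vanishing at the origin. -/
def mId (n : ℕ) : Ideal (On n) :=
  RingHom.ker (restrictOn n (pure_le_nhds (0 : Fin n → ℂ)))

/-- `X` is the germ at `0` of an analytic variety: `0 ∈ X` and, near `0`, `X` coincides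
with the common zero locus of finitely many holomorphic functions. -/
def IsAnalyticGermAt0 (n : ℕ) (X : Set (Fin n → ℂ)) : Prop :=
  (0 : Fin n → ℂ) ∈ X ∧
    ∃ (m : ℕ) (g : Fin m → (Fin n → ℂ) → ℂ),
      (∀ j, AnalyticAt ℂ (g j) 0) ∧
      ∀ᶠ x in 𝓝 (0 : Fin n → ℂ), (x ∈ X ↔ ∀ j, g j x = 0)

/-- The action `δ(g) = Σ δᵢ ∂g/∂xᵢ` of a vector field `δ ∈ Θ ≅ 𝒪ₙⁿ` on `g ∈ 𝒪ₙ`. -/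
def applyVF (δ : Fin n → On n) (g : On n) : On n := ∑ i, δ i * pd i g

lemma applyVF_add (a b : Fin n → On n) (g : On n) :
    applyVF (a + b) g = applyVF a g + applyVF b g := by
  simp [applyVF, add_mul, Finset.sum_add_distrib]

lemma applyVF_smul (c : On n) (a : Fin n → On n) (g : On n) :
    applyVF (c • a) g = c * applyVF a g := by
  simp [applyVF, Finset.mul_sum, smul_eq_mul, mul_assoc]

/-- For fixed `f`, the map `δ ↦ δ(f)` as an `𝒪ₙ`-linear map `Θ → 𝒪ₙ`. -/
def gradMap (n : ℕ) (f : On n) : (Fin n → On n) →ₗ[On n] On n where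
  toFun δ := applyVF δ f
  map_add' a b := applyVF_add a b f
  map_smul' c a := applyVF_smul c a f

/-- The module `Θ_X` of logarithmic vector fields of `X`, i.e. vector fields
preserving the ideal `I_X`. -/
def ThetaX (n : ℕ) (X : Set (Fin n → ℂ)) : Submodule (On n) (Fin n → On n) where
  carrier := {δ | ∀ g ∈ IX n X, applyVF δ g ∈ IX n X}
  add_mem' := by
    intro a b ha hb g hg
    rw [applyVF_add]
    exact Ideal.add_mem _ (ha g hg) (hb g hg)
  zero_mem' := by
    intro g hg
    have h0 : applyVF (0 : Fin n → On n) g = 0 := by simp [applyVF]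
    rw [h0]; exact Ideal.zero_mem _
  smul_mem' := by
    intro c a ha g hg
    rw [applyVF_smul]
    exact Ideal.mul_mem_left _ _ (ha g hg)

/-- The module `Θ_Y` of vector fields tangent to the hypersurface `Y = f⁻¹(0)`,
i.e. `δ(f) ∈ ⟨f⟩`. -/
def ThetaF (n : ℕ) (f : On n) : Submodule (On n) (Fin n → On n) :=
  Submodule.comap (gradMap n f) (Ideal.span {f})

/-- The module `H_Y` of Hamiltonian vector fields of `f`, i.e. `δ(f) = 0`. -/
def HamF (n : ℕ) (f : On n) : Submodule (On n) (Fin n → On n) :=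
  LinearMap.ker (gradMap n f)

/-- The Bruce–Roberts ideal `df(Θ_X) ⊆ 𝒪ₙ`. -/
def BRIdeal (n : ℕ) (X : Set (Fin n → ℂ)) (f : On n) : Ideal (On n) :=
  Submodule.map (gradMap n f) (ThetaX n X)

/-- The Jacobian ideal `J(f) = ⟨∂f/∂x₁, …, ∂f/∂xₙ⟩`. -/
def Jac (n : ℕ) (f : On n) : Ideal (On n) :=
  Ideal.span (Set.range fun i => pd i f)

/-- The ideal `J(f,h)` generated by the `2×2` minors of the Jacobian matrix of `(f,h)`. -/
def Jmin (n : ℕ) (f h : On n) : Ideal (On n) :=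
  Ideal.span (Set.range fun p : Fin n × Fin n => pd p.1 f * pd p.2 h - pd p.2 f * pd p.1 h)

/-- The Milnor number `μ(f)`. -/
def mu (n : ℕ) (f : On n) : ℕ := Module.finrank ℂ (On n ⧸ Jac n f)

/-- The Tjurina number `τ(f)`. -/
def tau (n : ℕ) (f : On n) : ℕ :=
  Module.finrank ℂ (On n ⧸ (Jac n f + Ideal.span {f}))

/-- The Bruce–Roberts Milnor number `μ_X(f)`. -/
def muX (n : ℕ) (X : Set (Fin n → ℂ)) (f : On n) : ℕ :=
  Module.finrank ℂ (On n ⧸ BRIdeal n X f)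

/-- The Bruce–Roberts Tjurina number `τ_X(f)`. -/
def tauX (n : ℕ) (X : Set (Fin n → ℂ)) (f : On n) : ℕ :=
  Module.finrank ℂ (On n ⧸ (BRIdeal n X f + Ideal.span {f}))

/-- The value at the origin of a germ in `𝒪ₙ`. -/
def ev0 (g : On n) : ℂ := On.rep g 0

/-- The linear part `j¹δ` of a vector field `δ`, as the matrix `(∂δⱼ/∂xᵢ)(0)`. -/
def linPart (δ : Fin n → On n) : Matrix (Fin n) (Fin n) ℂ :=
  Matrix.of fun i j => ev0 (pd i (δ j))

/-- The eigenvalues (with multiplicities) of the linear part of `δ` are given by `w`. -/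
def EigsEq (δ : Fin n → On n) (w : Fin n → ℚ) : Prop :=
  (linPart δ).charpoly = ∏ i, (Polynomial.X - Polynomial.C ((w i : ℂ)))

/-- The germ at `0` of the coordinate function `xᵢ`. -/
def coordG (i : Fin n) : On n :=
  mkOn (fun x : Fin n → ℂ => x i)
    ((ContinuousLinearMap.proj (R := ℂ) (φ := fun _ : Fin n => ℂ) i).analyticAt _)

/-- `g` is quasihomogeneous of degree `d` with respect to the weights `w` (in the given
coordinates): the Euler identity `Σ wᵢ xᵢ ∂g/∂xᵢ = d g` holds. -/
def IsQH (n : ℕ) (w : Fin n → ℚ) (d : ℚ) (g : On n) : Prop :=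
  ∑ i, (w i : ℂ) • (coordG i * pd i g) = (d : ℂ) • g

/-- A germ of a biholomorphic change of coordinates at `0 ∈ ℂⁿ`. -/
structure CoordChange (n : ℕ) where
  toFun : (Fin n → ℂ) → (Fin n → ℂ)
  invFun : (Fin n → ℂ) → (Fin n → ℂ)
  analyticAt : AnalyticAt ℂ toFun 0
  inv_analyticAt : AnalyticAt ℂ invFun 0
  map_zero : toFun 0 = 0
  inv_map_zero : invFun 0 = 0
  left_inv : ∀ᶠ x in 𝓝 (0 : Fin n → ℂ), invFun (toFun x) = x
  right_inv : ∀ᶠ x in 𝓝 (0 : Fin n → ℂ), toFun (invFun x) = x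

lemma CoordChange.tendsto (φ : CoordChange n) :
    Filter.Tendsto φ.toFun (𝓝 (0 : Fin n → ℂ)) (𝓝 (0 : Fin n → ℂ)) := by
  have h := φ.analyticAt.continuousAt
  rwa [ContinuousAt, φ.map_zero] at h

/-- The pullback (composition) of a germ `g ∈ 𝒪ₙ` under a change of coordinates. -/
def pullback (φ : CoordChange n) (g : On n) : On n :=
  ⟨(g : Filter.Germ (𝓝 (0 : Fin n → ℂ)) ℂ).compTendsto φ.toFun φ.tendsto, by
    refine ⟨On.rep g ∘ φ.toFun, ?_, ?_⟩
    · have h := On.rep_analyticAt g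
      rw [← φ.map_zero] at h
      exact h.comp φ.analyticAt
    · rw [← On.rep_spec g]
      exact (Filter.Germ.coe_compTendsto _ φ.tendsto).symm⟩

/-- Definition 1.1: the pair `(f, X)` is relatively quasihomogeneous with respect to the
weights `w`: in suitable coordinates, `f` is quasihomogeneous of degree `1` and `I_X` admits
a system of quasihomogeneous generators of positive degrees, all with respect to `w`. -/
def RelQH (n : ℕ) (X : Set (Fin n → ℂ)) (f : On n) (w : Fin n → ℚ) : Prop :=
  ∃ φ : CoordChange n,
    IsQH n w 1 (pullback φ f) ∧
    ∃ (m : ℕ) (h : Fin m → On n) (d : Fin m → ℚ),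
      Ideal.span (Set.range h) = IX n X ∧ (∀ j, 0 < d j) ∧
      ∀ j, IsQH n w (d j) (pullback φ (h j))

/-- The variety `X` is quasihomogeneous with respect to the weights `w`: in suitable
coordinates, `I_X` admits a system of quasihomogeneous generators of positive degrees. -/
def VarQH (n : ℕ) (X : Set (Fin n → ℂ)) (w : Fin n → ℚ) : Prop :=
  ∃ φ : CoordChange n,
    ∃ (m : ℕ) (h : Fin m → On n) (d : Fin m → ℚ),
      Ideal.span (Set.range h) = IX n X ∧ (∀ j, 0 < d j) ∧
      ∀ j, IsQH n w (d j) (pullback φ (h j))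

instance (f : On n) : HasQuotient (↥(ThetaF n f)) (Submodule ↥(On n) ↥(ThetaF n f)) :=
  Submodule.hasQuotient (R := ↥(On n)) (M := ↥(ThetaF n f))

/-!
The map `δ ↦ δ(f)` is `𝒪ₙ`-linear with kernel `H_Y` and image `J(f)`, and it sends `Θ_X` onto
`df(Θ_X)`. Hence `0 → Θ/(Θ_X + H_Y) → 𝒪ₙ/df(Θ_X) → 𝒪ₙ/J(f) → 0` is exact, and the formula is the
additivity of dimension.
-/

section QuotientMap

universe v w

variable {R : Type*} {M : Type v} {P : Type w} [Ring R] [AddCommGroup M] [AddCommGroup P]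
  [Module R M] [Module R P] (φ : M →ₗ[R] P) (N : Submodule R M)

/-- The map `M/(N + ker φ) → P/φ(N)` induced by `φ`; it identifies its source with the kernel of
the projection `P/φ(N) → P/φ(M)`. -/
def quotientSupKerMap : M ⧸ (N ⊔ LinearMap.ker φ) →ₗ[R] P ⧸ N.map φ :=
  Submodule.mapQ _ _ φ (Submodule.comap_map_eq φ N).ge

lemma quotientSupKerMap_injective : Function.Injective (quotientSupKerMap φ N) := by
  rw [← LinearMap.ker_eq_bot, quotientSupKerMap, Submodule.ker_mapQ, Submodule.comap_map_eq,
    Submodule.mkQ_map_self]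

lemma range_quotientSupKerMap :
    LinearMap.range (quotientSupKerMap φ N) =
      LinearMap.ker (Submodule.factor (LinearMap.map_le_range (f := φ) (p := N))) := by
  rw [quotientSupKerMap, Submodule.range_mapQ, Submodule.factor, Submodule.ker_mapQ,
    Submodule.comap_id]

lemma lift_rank_quotient_map (K : Type*) [Ring K] [HasRankNullity.{w} K] [SMul K R] [Module K M]
    [Module K P] [IsScalarTower K R M] [IsScalarTower K R P] :
    Cardinal.lift.{v} (Module.rank K (P ⧸ N.map φ)) =
      Cardinal.lift.{v} (Module.rank K (P ⧸ LinearMap.range φ)) +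
        Cardinal.lift.{w} (Module.rank K (M ⧸ (N ⊔ LinearMap.ker φ))) := by
  let ι := (quotientSupKerMap φ N).restrictScalars K
  have hle : N.map φ ≤ LinearMap.range φ := LinearMap.map_le_range
  let π := (Submodule.factor hle).restrictScalars K
  have hι : Function.Injective ι := quotientSupKerMap_injective φ N
  have hπ : Function.Surjective π := Submodule.factor_surjective hle
  have hexact : LinearMap.range ι = LinearMap.ker π :=
    congrArg (Submodule.restrictScalars K) (range_quotientSupKerMap φ N)
  rw [LinearMap.rank_eq_of_surjective hπ, Cardinal.lift_add, ← hexact,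
    lift_rank_range_of_injective ι hι]

end QuotientMap

lemma gradMap_eq_linearCombination (f : On n) :
    gradMap n f = Fintype.linearCombination (On n) fun i => pd i f :=
  rfl

lemma range_gradMap (f : On n) : LinearMap.range (gradMap n f) = Jac n f := by
  rw [gradMap_eq_linearCombination, Fintype.range_linearCombination, Jac, Ideal.span]

theorem muX_decomposition_general (X : Set (Fin n → ℂ)) (f : On n) :
    Module.rank ℂ (On n ⧸ BRIdeal n X f) =
      Module.rank ℂ (On n ⧸ Jac n f) +
        Module.rank ℂ ((Fin n → On n) ⧸ (ThetaX n X ⊔ HamF n f)) := by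
  rw [← range_gradMap, BRIdeal, HamF]
  simpa only [Cardinal.lift_id] using lift_rank_quotient_map (gradMap n f) (ThetaX n X) ℂ

/-- Formula (2) of Proposition 2.1: `μ_X(f) = μ(f) + dim_ℂ Θ/(Θ_X + H_Y)`. -/
theorem muX_decomposition (n : ℕ) (X : Set (Fin n → ℂ)) (hX : IsAnalyticGermAt0 n X)
    (f : On n) (hfin : FiniteDimensional ℂ (On n ⧸ BRIdeal n X f)) :
    muX n X f = mu n f +
      Module.finrank ℂ ((Fin n → On n) ⧸ (ThetaX n X ⊔ HamF n f)) := by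
  have key := muX_decomposition_general X f
  have ⟨hJac, hTheta⟩ := Cardinal.add_lt_aleph0_iff.mp (key ▸ Module.rank_lt_aleph0 ℂ _)
  rw [muX, mu, Module.finrank, key, Cardinal.toNat_add hJac hTheta, Module.finrank, Module.finrank]

end
end

section
/- Let X ⊆ (ℂ^n,0) be a germ of an analytic variety and f ∈ O_n with μ_X(f) < ∞, and set Y = f^{-1}(0). Then μ_X(f) − τ_X(f) = μ(f) − τ(f) + dim_ℂ Θ_Y/(H_Y + (Θ_X ∩ Θ_Y)). -/
open Filter Topology Polynomial

set_option maxHeartbeats 1000000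
set_option synthInstance.maxHeartbeats 1000000

noncomputable section

variable {n : ℕ}

instance (f : On n) (N : Submodule ↥(On n) ↥(ThetaF n f)) : AddCommGroup (↥(ThetaF n f) ⧸ N) :=
  Submodule.Quotient.addCommGroup (R := ↥(On n)) (M := ↥(ThetaF n f)) N

instance (f : On n) (N : Submodule ↥(On n) ↥(ThetaF n f)) : Module ℂ (↥(ThetaF n f) ⧸ N) :=
  Submodule.Quotient.module' (R := ↥(On n)) (M := ↥(ThetaF n f)) (S := ℂ) N

/-!
Write `B = df(Θ_X) ⊆ J = df(Θ) = J(f)` and `I = ⟨f⟩`. Measuring the drop of codimension when `I` is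
added to `B` and to `J` gives `μ_X - τ_X = dim I / (B ∩ I)` and `μ - τ = dim I / (J ∩ I)`. The
difference of the two is `dim (J ∩ I) / (B ∩ I)`, and `df` maps `Θ_Y = df⁻¹(I)` onto `J ∩ I`, where
the preimage of `B ∩ I` is `H_Y + (Θ_X ∩ Θ_Y)` by the modular law.
-/

section RelativeDimension

variable {R M N : Type*} [Ring R] [AddCommGroup M] [Module R M] [AddCommGroup N] [Module R N]

lemma range_submoduleComap (g : M →ₗ[R] N) (I : Submodule R N) :
    LinearMap.range (g.submoduleComap I) = (LinearMap.range g).comap I.subtype := by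
  ext ⟨y, hy⟩
  constructor
  · rintro ⟨x, hx⟩
    exact ⟨x, congrArg Subtype.val hx⟩
  · rintro ⟨x, rfl⟩
    exact ⟨⟨x, hy⟩, rfl⟩

lemma ker_sup_inf_comap_eq_comap_map_inf (g : M →ₗ[R] N) (T : Submodule R M) (I : Submodule R N) :
    LinearMap.ker g ⊔ T ⊓ I.comap g = (T.map g ⊓ I).comap g := by
  rw [Submodule.comap_inf, Submodule.comap_map_eq, sup_comm T,
    sup_inf_assoc_of_le T (LinearMap.ker_le_comap g)]

variable (K : Type*) [DivisionRing K] [SMul K R]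
  [Module K M] [IsScalarTower K R M] [Module K N] [IsScalarTower K R N]

lemma finite_quotient_comap (h : M →ₗ[R] N) (P : Submodule R N) [Module.Finite K (N ⧸ P)] :
    Module.Finite K (M ⧸ P.comap h) := by
  have h_inj : Function.Injective ((P.comap h).mapQ P h le_rfl) := by
    rw [← LinearMap.ker_eq_bot, Submodule.ker_mapQ, Submodule.mkQ_map_self]
  exact Module.Finite.of_injective (((P.comap h).mapQ P h le_rfl).restrictScalars K) h_inj

lemma finrank_quotient_eq_finrank_quotient_sup_range_add (h : M →ₗ[R] N) (P : Submodule R N)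
    [Module.Finite K (N ⧸ P)] :
    Module.finrank K (N ⧸ P) = Module.finrank K (N ⧸ P ⊔ LinearMap.range h) +
      Module.finrank K (M ⧸ P.comap h) := by
  have h_ker : LinearMap.ker (P.mkQ ∘ₗ h) = P.comap h := by
    rw [LinearMap.ker_comp, Submodule.ker_mkQ]
  have h_range : LinearMap.range (P.mkQ ∘ₗ h) = (LinearMap.range h).map P.mkQ :=
    LinearMap.range_comp h P.mkQ
  let e_range := (Submodule.quotEquivOfEq _ _ h_ker).symm ≪≫ₗ (P.mkQ ∘ₗ h).quotKerEquivRange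
  let e_coker := Submodule.quotEquivOfEq _ _ h_range ≪≫ₗ
    Submodule.quotientQuotientEquivQuotientSup P (LinearMap.range h)
  rw [(e_range.restrictScalars K).finrank_eq, ← (e_coker.restrictScalars K).finrank_eq]
  exact (Submodule.finrank_quotient_add_finrank
    ((LinearMap.range (P.mkQ ∘ₗ h)).restrictScalars K)).symm

lemma finrank_quotient_eq_finrank_quotient_sup_add (P I : Submodule R N)
    [Module.Finite K (N ⧸ P)] :
    Module.finrank K (N ⧸ P) = Module.finrank K (N ⧸ P ⊔ I) +
      Module.finrank K (I ⧸ P.comap I.subtype) := by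
  have h := finrank_quotient_eq_finrank_quotient_sup_range_add K I.subtype P
  rwa [Submodule.range_subtype] at h

lemma finrank_quotient_comap_subtype_map (g : M →ₗ[R] N) (T : Submodule R M) (I : Submodule R N)
    [Module.Finite K (N ⧸ T.map g)] :
    Module.finrank K (I ⧸ (T.map g).comap I.subtype) =
      Module.finrank K (I ⧸ (LinearMap.range g).comap I.subtype) +
        Module.finrank K (I.comap g ⧸
          (LinearMap.ker g ⊔ T ⊓ I.comap g).comap (I.comap g).subtype) := by
  have h_sup : (T.map g).comap I.subtype ⊔ LinearMap.range (g.submoduleComap I) =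
      (LinearMap.range g).comap I.subtype := by
    rw [range_submoduleComap]
    exact sup_eq_right.2 (Submodule.comap_mono LinearMap.map_le_range)
  have h_comap : ((T.map g).comap I.subtype).comap (g.submoduleComap I) =
      (LinearMap.ker g ⊔ T ⊓ I.comap g).comap (I.comap g).subtype := by
    rw [ker_sup_inf_comap_eq_comap_map_inf]
    ext x
    exact (and_iff_left x.2).symm
  have := finite_quotient_comap K I.subtype (T.map g)
  rw [finrank_quotient_eq_finrank_quotient_sup_range_add K (g.submoduleComap I), h_sup, h_comap]

theorem muX_sub_tauX_decomposition_general (g : M →ₗ[R] N) (T : Submodule R M)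
    (I : Submodule R N) (hfin : Module.Finite K (N ⧸ T.map g)) :
    (Module.finrank K (N ⧸ T.map g) : ℤ) - Module.finrank K (N ⧸ T.map g ⊔ I) =
      (Module.finrank K (N ⧸ LinearMap.range g) : ℤ) -
        Module.finrank K (N ⧸ LinearMap.range g ⊔ I) +
      Module.finrank K (I.comap g ⧸
        (LinearMap.ker g ⊔ T ⊓ I.comap g).comap (I.comap g).subtype) := by
  have : Module.Finite K (N ⧸ LinearMap.range g) :=
    Module.Finite.of_surjective ((Submodule.factor LinearMap.map_le_range).restrictScalars K)
      (Submodule.factor_surjective (p := T.map g) LinearMap.map_le_range)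
  have h_map := finrank_quotient_eq_finrank_quotient_sup_add K (T.map g) I
  have h_range := finrank_quotient_eq_finrank_quotient_sup_add K (LinearMap.range g) I
  have h_diff := finrank_quotient_comap_subtype_map K g T I
  omega

end RelativeDimension

/-- Formula (4) of Proposition 2.1 together with (1):
`μ_X(f) − τ_X(f) = μ(f) − τ(f) + dim_ℂ Θ_Y/(H_Y + (Θ_X ∩ Θ_Y))`. -/
theorem muX_sub_tauX_decomposition (n : ℕ) (X : Set (Fin n → ℂ))
    (hX : IsAnalyticGermAt0 n X) (f : On n)
    (hfin : FiniteDimensional ℂ (On n ⧸ BRIdeal n X f)) :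
    (muX n X f : ℤ) - tauX n X f = (mu n f : ℤ) - tau n f +
      Module.finrank ℂ ((ThetaF n f) ⧸
        Submodule.comap (ThetaF n f).subtype (HamF n f ⊔ (ThetaX n X ⊓ ThetaF n f))) := by
  rw [mu, tau, ← range_gradMap]
  exact muX_sub_tauX_decomposition_general ℂ (gradMap n f) (ThetaX n X) (Ideal.span {f}) hfin

end
end
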